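/- For n ≥ 1 and k ≥ 0, the number of Tamari intervals (T, T') of size n such that the canopy-vectors of T and T' agree in exactly k+2 positions equals (2/(n(n+1))) · C(3n, k) · C(n+1, k+2). -/

import Mathlib

/-- Binary trees: a leaf or a binary node with two subtrees. -/
inductive BT : Type
  | leaf : BT
  | node : BT → BT → BT

namespace BT

/-- Number of binary (internal) nodes. -/
def size : BT → ℕ
  | leaf => 0
  | node l r => l.size + r.size + 1

/-- One right rotation somewhere in the tree: ((A,B),C) ↦ (A,(B,C)). -/
inductive Rot : BT → BT → Prop
  | rotate (A B C : BT) : Rot (node (node A B) C) (node A (node B C))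
  | left {l l' : BT} (r : BT) : Rot l l' → Rot (node l r) (node l' r)
  | right (l : BT) {r r' : BT} : Rot r r' → Rot (node l r) (node l r')

/-- Tamari order: reflexive-transitive closure of right rotation. -/
def tle (T T' : BT) : Prop := Relation.ReflTransGen Rot T T'

/-- Bracket-vector: sizes of right subtrees of nodes, in infix order. -/
def bracket : BT → List ℕ
  | leaf => []
  | node l r => bracket l ++ r.size :: bracket r

/-- Dual bracket-vector: sizes of left subtrees of nodes, in infix order. -/
def dualBracket : BT → List ℕ
  | leaf => []
  | node l r => dualBracket l ++ l.size :: dualBracket r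

/-- Canopy word: for each leaf (left to right), 1 if it is a left child, 0 if a right child;
the argument `b` is the value assigned to the tree if it is itself a leaf. -/
def canopyAux (b : ℕ) : BT → List ℕ
  | leaf => [b]
  | node l r => canopyAux 1 l ++ canopyAux 0 r

/-- Canopy-vector of a binary tree. -/
def canopy (T : BT) : List ℕ := canopyAux 1 T

/-- Left-right mirror. -/
def mir : BT → BT
  | leaf => leaf
  | node l r => node (mir r) (mir l)

/-- Tamari interval of size n. -/
def interval (p : BT × BT) (n : ℕ) : Prop :=
  p.1.size = n ∧ p.2.size = n ∧ tle p.1 p.2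

/-- Tamari interval (of unspecified size). -/
def isInt (p : BT × BT) : Prop := p.1.size = p.2.size ∧ tle p.1 p.2

/-- The rise operation (T,T') ↦ ((T,ε),(ε,T')). -/
def riseF (p : BT × BT) : BT × BT := (node p.1 leaf, node leaf p.2)

/-- An interval is modern when its rise is again an interval. -/
def modern (p : BT × BT) : Prop := tle (node p.1 leaf) (node leaf p.2)

/-- Infinitely modern: every iterated rise is an interval. -/
def infModern (p : BT × BT) : Prop :=
  ∀ k : ℕ, tle ((riseF^[k] p).1) ((riseF^[k] p).2)

/-- Synchronized: equal canopies. -/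
def synced (p : BT × BT) : Prop := canopy p.1 = canopy p.2

/-- Self-dual: equal to its dual (mir T', mir T). -/
def selfDual (p : BT × BT) : Prop := mir p.2 = p.1 ∧ mir p.1 = p.2

/-- Number of positions where the two canopies agree. -/
def agreeCount (p : BT × BT) : ℕ :=
  ((List.range (p.1.size + 1)).filter
    (fun i => (canopy p.1).getD i 0 == (canopy p.2).getD i 0)).length

/-- Number of canopy positions of joint type (a on top, b on bottom), for an interval (T,T')
with T' the upper tree. -/
def typeCount (a b : ℕ) (p : BT × BT) : ℕ :=
  ((List.range (p.1.size + 1)).filter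
    (fun i => ((canopy p.2).getD i 0 == a) && ((canopy p.1).getD i 0 == b))).length

end BT

/-!
A tree lies below `node L R` in the Tamari order iff it is obtained by grafting a tree `A ≤ L` on
the left spine of a tree `S ≤ R`; depth, `A` and `S` are then determined. Give a pair `(T, T')`
the weight `y ^ a * (1 + x) ^ s`, where `a` counts the agreements of the canopies after the first
letter (which always agree) and `s` is the length of the left spine of `T`. Then the generating
function `H` of the intervals of positive size, which `t` marks, satisfies
`x H = t (1 + x) (1 + H) (y x + x H + y H - y K)`, where `K = H(x = 0)`.

At the series `V(t)` annihilating the derivative of this equation in `H`, the derivative in `x`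
vanishes as well. The resulting system for `V` and `U = H(V)` is symmetric in `U` and `V`, which
forces `V = U` and yields `U = t (1 + U)³ (y + U)` and `y K = y U - y U² - U³`. Lagrange inversion
then gives the coefficients of `K`.
-/

section QuadraticMethod

open PowerSeries

variable {A : Type*} [CommRing A]

-- By Weierstrass division, every class modulo `g` has a unique constant representative.
theorem exists_algHom_apply_eq_zero {I : Ideal A} [IsAdicComplete I A] {g : A⟦X⟧}
    (hg : g.IsWeierstrassDivisorAt I) (hord : (g.map (Ideal.Quotient.mk I)).order.toNat = 1) :
    ∃ ε : A⟦X⟧ →ₐ[A] A, ε g = 0 := by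
  have hbij : Function.Bijective (Algebra.ofId A (A⟦X⟧ ⧸ Ideal.span {g})) := by
    constructor
    · refine (injective_iff_map_eq_zero _).2 fun a ha => ?_
      obtain ⟨q, hq⟩ := Ideal.mem_span_singleton.1 (Ideal.Quotient.eq_zero_iff_mem.1 ha)
      have hdeg : (Polynomial.C a).degree < (g.map (Ideal.Quotient.mk I)).order.toNat := by
        rw [hord]
        exact Polynomial.degree_C_le.trans_lt (by simp)
      have heq : g * q = (Polynomial.C a : Polynomial A) := by
        rw [← hq, Polynomial.coe_C, PowerSeries.algebraMap_apply, Algebra.algebraMap_self_apply]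
      exact Polynomial.C_eq_zero.1 (hg.eq_zero_of_mul_eq hdeg heq).2
    · rintro ⟨f⟩
      have hf := hg.isWeierstrassDivisionAt_div_mod f
      obtain ⟨a, ha⟩ : ∃ a, hg.mod f = Polynomial.C a :=
        ⟨_, Polynomial.eq_C_of_degree_le_zero <| Nat.WithBot.lt_one_iff_le_zero.1 <| by
          simpa [hord] using hf.degree_lt⟩
      refine ⟨a, Ideal.Quotient.eq.2 (Ideal.mem_span_singleton.2 ⟨-hg.div f, ?_⟩)⟩
      have := hf.eq_mul_add
      rw [ha, Polynomial.coe_C] at this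
      rw [PowerSeries.algebraMap_apply, Algebra.algebraMap_self_apply]
      linear_combination -this
  let e := AlgEquiv.ofBijective _ hbij
  refine ⟨e.symm.toAlgHom.comp (Ideal.Quotient.mkₐ A (Ideal.span {g})), ?_⟩
  have : Ideal.Quotient.mkₐ A (Ideal.span {g}) g = 0 :=
    Ideal.Quotient.eq_zero_iff_mem.2 (Ideal.mem_span_singleton_self g)
  rw [AlgHom.comp_apply, this, map_zero]

/-- The homomorphism `ε` is evaluation at the solution `V` of `V = t * Ψ(V)`. -/
theorem exists_algHom_apply_X_eq_mul (t : A) [IsAdicComplete (Ideal.span {t}) A] (Ψ : A⟦X⟧) :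
    ∃ ε : A⟦X⟧ →ₐ[A] A, ε X = t * ε Ψ := by
  nontriviality A
  have htI : t ∈ Ideal.span {t} := Ideal.mem_span_singleton_self t
  have : Nontrivial (A ⧸ Ideal.span {t}) := Ideal.Quotient.nontrivial_iff.2 fun h =>
    not_subsingleton A (h ▸ ‹IsAdicComplete (Ideal.span {t}) A›).toIsHausdorff.subsingleton
  have ht : Ideal.Quotient.mk (Ideal.span {t}) t = 0 := Ideal.Quotient.eq_zero_iff_mem.2 htI
  have hord : ((X - C t * Ψ).map (Ideal.Quotient.mk (Ideal.span {t}))).order.toNat = 1 := by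
    simp [ht, order_X]
  have hunit : (X - C t * Ψ).IsWeierstrassDivisorAt (Ideal.span {t}) := by
    have h := Ideal.mem_jacobson_bot.1 (IsAdicComplete.le_jacobson_bot _ htI) (-coeff 1 Ψ)
    rw [IsWeierstrassDivisorAt, hord]
    rwa [map_sub, coeff_one_X, coeff_C_mul, sub_eq_neg_add, ← mul_neg]
  obtain ⟨ε, hε⟩ := exists_algHom_apply_eq_zero hunit hord
  have hεC : ε (C t) = t := ε.commutes t
  exact ⟨ε, by rwa [map_sub, map_mul, hεC, sub_eq_zero] at hε⟩

theorem parametrization_of_kernel_system [IsDomain A] {t y z U V : A} (ht : t ≠ 0)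
    (hy : y ∉ Ideal.span {t})
    (heq : V * U = t * (1 + V) * (1 + U) * (y * V + V * U + y * U - z))
    (hV : V = t * ((1 + V) * ((y * V + V * U + y * U - z) + (1 + U) * (y + V))))
    (hU : U = t * ((1 + U) * ((y * V + V * U + y * U - z) + (1 + V) * (y + U)))) :
    U = t * ((1 + U) ^ 3 * (y + U)) ∧ z = y * U - y * U ^ 2 - U ^ 3 := by
  have htU : t ∣ U := ⟨_, hU⟩
  have htV : t ∣ V := ⟨_, hV⟩
  rw [Ideal.mem_span_singleton] at hy
  have hU_ne : 1 + U ≠ 0 := fun h =>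
    hy <| (htU.mul_left (-y)).trans (dvd_of_eq (by linear_combination -y * h))
  have hUV : V = U := by
    have hU' : U = t * (1 + V) ^ 2 * (1 + U) * (y + U) := by
      linear_combination (1 + V) * hU - heq
    have hV' : V = t * (1 + V) * (1 + U) ^ 2 * (y + V) := by
      linear_combination (1 + U) * hV - heq
    have hprod : (V - U) * (y + (y * (U + V) + U * V)) = 0 := by
      linear_combination (1 + V) * (y + U) * hV' - (1 + U) * (y + V) * hU'
    refine sub_eq_zero.1 ((mul_eq_zero.1 hprod).resolve_right fun h => hy ?_)
    rw [eq_neg_of_add_eq_zero_left h, dvd_neg]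
    exact dvd_add ((dvd_add htU htV).mul_left y) (htU.mul_right V)
  subst hUV
  have hV' : V = t * ((1 + V) ^ 3 * (y + V)) := by linear_combination (1 + V) * hV - heq
  refine ⟨hV', ?_⟩
  have hprod : t * (1 + V) ^ 2 * (y * V - y * V ^ 2 - V ^ 3 - z) = 0 := by
    linear_combination V * hV' - heq
  have := (mul_eq_zero.1 hprod).resolve_left (mul_ne_zero ht (pow_ne_zero 2 hU_ne))
  linear_combination -this

/-- Evaluating at the root `V` of the derivative of the equation with respect to `H` makes its
derivative with respect to `X` vanish too: this is the quadratic method. -/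
theorem exists_parametrization_of_kernel_equation [IsDomain A] {t y z : A}
    [IsAdicComplete (Ideal.span {t}) A] (ht : t ≠ 0) (hy : y ∉ Ideal.span {t}) {H : A⟦X⟧}
    (hH : X * H = C t * (1 + X) * (1 + H) * (C y * X + X * H + C y * H - C z)) :
    ∃ U : A, U = t * ((1 + U) ^ 3 * (y + U)) ∧ z = y * U - y * U ^ 2 - U ^ 3 := by
  obtain ⟨ε, hε⟩ := exists_algHom_apply_X_eq_mul t
    ((1 + X) * ((C y * X + X * H + C y * H - C z) + (1 + H) * (C y + X)))
  have hεC (a : A) : ε (C a) = a := ε.commutes a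
  have heq := congrArg ε hH
  have hderiv := congrArg (fun F => ε (derivative A F)) hH
  simp only [map_add, map_sub, map_mul, map_one, hεC, Derivation.leibniz, smul_eq_mul,
    derivative_X, derivative_C, Derivation.map_one_eq_zero, mul_zero, add_zero, zero_add,
    sub_zero, mul_one] at hε heq hderiv
  refine ⟨ε H, parametrization_of_kernel_system ht hy heq hε ?_⟩
  linear_combination hderiv - ε (derivative A H) * hε

end QuadraticMethod

section LagrangeInversion

open Polynomial

variable {R : Type*} [CommRing R]

theorem constantCoeff_aeval_eq_coeff_zero {U : PowerSeries R}
    (hU : PowerSeries.constantCoeff U = 0) (p : R[X]) :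
    PowerSeries.constantCoeff (aeval U p) = p.coeff 0 := by
  rw [aeval_def, hom_eval₂, hU, eval₂_at_zero]
  simp

theorem coeff_succ_aeval_eq_coeff_aeval_divX_mul {φ : R[X]} {U : PowerSeries R}
    (hU : U = PowerSeries.X * aeval U φ) (h : R[X]) (n : ℕ) :
    PowerSeries.coeff (n + 1) (aeval U h) = PowerSeries.coeff n (aeval U (divX h * φ)) := by
  have hXU : aeval U (divX h) * U = PowerSeries.X * aeval U (divX h * φ) := by
    rw [map_mul, mul_left_comm, ← hU]
  have hC : aeval U (C (h.coeff 0)) = PowerSeries.C (h.coeff 0) := aeval_C _ _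
  nth_rw 1 [← divX_mul_X_add h]
  rw [map_add, map_mul, aeval_X, hXU, hC, map_add, PowerSeries.coeff_succ_X_mul,
    PowerSeries.coeff_C, if_neg n.succ_ne_zero, add_zero]

theorem lagrange_inversion [IsAddTorsionFree R] {φ : R[X]} {U : PowerSeries R}
    (hU : U = PowerSeries.X * aeval U φ) (h : R[X]) (n : ℕ) :
    (n + 1) * PowerSeries.coeff (n + 1) (aeval U h) = (derivative h * φ ^ (n + 1)).coeff n := by
  induction n generalizing h with
  | zero =>
    have hU0 : PowerSeries.constantCoeff U = 0 := by rw [hU]; simp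
    rw [coeff_succ_aeval_eq_coeff_aeval_divX_mul hU, PowerSeries.coeff_zero_eq_constantCoeff_apply,
      constantCoeff_aeval_eq_coeff_zero hU0]
    simp [mul_coeff_zero, coeff_derivative]
  | succ n ih =>
    set p := divX h
    have hderiv : (derivative h * φ ^ (n + 2)).coeff (n + 1) =
        (derivative p * φ ^ (n + 2)).coeff n + (p * φ ^ (n + 2)).coeff (n + 1) := by
      have : derivative h = derivative p * X + p := by
        nth_rw 1 [← divX_mul_X_add h]
        simp [p]
      rw [this, add_mul, mul_right_comm, coeff_add, coeff_mul_X]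
    have hproduct : (n + 1) • (derivative p * φ ^ (n + 2)) + derivative (p * φ ^ (n + 2)) =
        (n + 2) • (derivative (p * φ) * φ ^ (n + 1)) := by
      simp only [derivative_mul, derivative_pow_succ, nsmul_eq_mul, map_add, map_natCast, map_one]
      push_cast
      ring
    have hcoeff := congrArg (coeff · n) hproduct
    simp only [coeff_add, coeff_smul, coeff_derivative, ← ih (p * φ)] at hcoeff
    refine nsmul_right_injective n.succ_ne_zero ?_
    beta_reduce
    rw [coeff_succ_aeval_eq_coeff_aeval_divX_mul hU, hderiv]
    simp only [nsmul_eq_mul] at hcoeff ⊢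
    push_cast at hcoeff ⊢
    linear_combination -hcoeff

theorem coeff_X_mul_derivative (p : R[X]) (n : ℕ) :
    (X * derivative p).coeff n = n * p.coeff n := by
  cases n with
  | zero => simp
  | succ n =>
    rw [coeff_X_mul, coeff_derivative, mul_comm]
    push_cast
    rfl

theorem coeff_succ_of_parametrization [IsAddTorsionFree R] {y : R} {U z : PowerSeries R}
    (hU : U = PowerSeries.X * ((1 + U) ^ 3 * (PowerSeries.C y + U)))
    (hz : z = PowerSeries.C y * U - PowerSeries.C y * U ^ 2 - U ^ 3) (n : ℕ) :
    (n + 1) * (n + 2) * PowerSeries.coeff (n + 1) z =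
      2 * ((X + C y) ^ (n + 2) * (1 + X) ^ (3 * (n + 1))).coeff n := by
  set φ : R[X] := (1 + X) ^ 3 * (X + C y)
  set h : R[X] := C y * X - C y * X ^ 2 - X ^ 3
  set P : R[X] := (1 + X) * (X + C y) * φ ^ (n + 1)
  have haevalC : aeval U (C y) = PowerSeries.C y := aeval_C _ _
  have hUφ : U = PowerSeries.X * aeval U φ := by simpa [φ, haevalC, add_comm] using hU
  have hzh : z = aeval U h := by simpa [h, haevalC] using hz
  have hφ : (1 + X) * (X + C y) * derivative φ = (3 * (X + C y) + (1 + X)) * φ := by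
    simp [φ, derivative_mul, derivative_pow_succ, map_ofNat]
    ring
  have hpow : (X + C y) ^ (n + 2) * (1 + X) ^ (3 * (n + 1)) = (X + C y) * φ ^ (n + 1) := by
    simp only [φ, mul_pow, ← pow_mul]
    ring
  have key : (n + 2) • (derivative h * φ ^ (n + 1)) + X * derivative P =
      2 • ((X + C y) * φ ^ (n + 1)) + n • P := by
    have hP : derivative P = ((X + C y) + (1 + X)) * φ ^ (n + 1) +
        (n + 1 : R[X]) * φ ^ n * ((1 + X) * (X + C y) * derivative φ) := by
      simp [P, derivative_mul, derivative_pow_succ]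
      ring
    have hh : derivative h = C y - 2 * C y * X - 3 * X ^ 2 := by
      simp [h, derivative_mul, derivative_pow_succ, map_ofNat]
      ring
    rw [hP, hφ, hh]
    simp only [P, nsmul_eq_mul]
    push_cast
    ring
  have hcoeff := congrArg (coeff · n) key
  simp only [coeff_add, coeff_smul, coeff_X_mul_derivative, ← lagrange_inversion hUφ,
    ← hzh] at hcoeff
  rw [hpow]
  simp only [nsmul_eq_mul] at hcoeff
  push_cast at hcoeff
  linear_combination hcoeff

end LagrangeInversion

section BinomialCoefficients

open Polynomial

variable {R : Type*} [CommRing R]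

theorem coeff_coeff_X_add_C_X_pow_mul_map (q : R[X]) (m n j : ℕ) :
    (((X + C X) ^ m * q.map C).coeff n).coeff j = (m.choose j : R) * (X ^ (m - j) * q).coeff n := by
  have hterm (i : ℕ) :
      (((C X : R[X][X]) ^ i * X ^ (m - i) * (m.choose i : R[X][X]) * q.map C).coeff n).coeff j =
        if j = i then (m.choose i : R) * (X ^ (m - i) * q).coeff n else 0 := by
    have : (C X : R[X][X]) ^ i * X ^ (m - i) * (m.choose i : R[X][X]) * q.map C =
        C (X ^ i) * ((C (m.choose i : R) * (X ^ (m - i) * q)).map C) := by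
      simp
      ring
    rw [this, coeff_C_mul, coeff_map, mul_comm, coeff_C_mul_X_pow, coeff_C_mul]
  rw [add_comm, add_pow, Finset.sum_mul, finsetSum_coeff, finsetSum_coeff]
  simp only [hterm, Finset.sum_ite_eq, Finset.mem_range, Nat.lt_succ_iff]
  rw [ite_eq_left_iff, not_le]
  intro h
  simp [Nat.choose_eq_zero_of_lt h]

theorem coeff_coeff_X_add_C_X_pow_mul_one_add_X_pow (N n k : ℕ) :
    (((X + C X : R[X][X]) ^ (n + 2) * (1 + X) ^ N).coeff n).coeff (k + 2) =
      (N.choose k : R) * ((n + 2).choose (k + 2) : R) := by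
  have hmap : (1 + X : R[X][X]) ^ N = ((1 + X : R[X]) ^ N).map C := by simp
  rw [hmap, coeff_coeff_X_add_C_X_pow_mul_map, Nat.add_sub_add_right, coeff_X_pow_mul',
    coeff_one_add_X_pow, mul_comm]
  obtain hk | hk := le_or_gt k n
  · rw [if_pos (Nat.sub_le n k), Nat.sub_sub_self hk]
  · simp [Nat.choose_eq_zero_of_lt (Nat.add_lt_add_right hk 2)]

end BinomialCoefficients

section SwapVars

open PowerSeries

variable {R : Type*} [CommRing R]

/-- The embedding `R[x]⟦t⟧ → R⟦t⟧⟦x⟧`, exchanging the roles of the two variables. Series in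
`t` can be substituted for `x` in the target. -/
noncomputable def swapVars : (Polynomial R)⟦X⟧ →+* R⟦X⟧⟦X⟧ where
  toFun F := mk fun i => mk fun n => (coeff n F).coeff i
  map_zero' := by ext; simp
  map_one' := by
    ext i n
    rw [coeff_mk, coeff_mk, coeff_one, coeff_one]
    split_ifs <;> simp [*, coeff_one, Polynomial.coeff_one]
  map_add' F G := by ext; simp
  map_mul' F G := by
    ext i n
    simp only [coeff_mk, coeff_mul, Polynomial.finsetSum_coeff, Polynomial.coeff_mul, map_sum]
    exact Finset.sum_comm

theorem coeff_coeff_swapVars (F : (Polynomial R)⟦X⟧) (i n : ℕ) :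
    coeff n (coeff i (swapVars F)) = (coeff n F).coeff i := by
  simp [swapVars]

theorem swapVars_X : swapVars (X : (Polynomial R)⟦X⟧) = C X := by
  ext i n
  rw [coeff_coeff_swapVars, coeff_X, coeff_C]
  split_ifs <;> simp [*, coeff_X, Polynomial.coeff_one]

theorem swapVars_C_X : swapVars (C (Polynomial.X : Polynomial R)) = X := by
  ext i n
  rw [coeff_coeff_swapVars, coeff_X, coeff_C]
  split_ifs <;> simp [*, coeff_one, Polynomial.coeff_X, eq_comm]

theorem swapVars_map_C (F : R⟦X⟧) : swapVars (map Polynomial.C F) = C F := by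
  ext i n
  rw [coeff_coeff_swapVars, coeff_map, Polynomial.coeff_C, coeff_C]
  split_ifs <;> simp

theorem swapVars_C_C (r : R) : swapVars (C (Polynomial.C r)) = C (C r) := by
  rw [← map_C, swapVars_map_C]

end SwapVars

section Agreements

variable {α : Type*} [DecidableEq α]

/-- Number of positions at which two words carry the same letter, the longer word being truncated
to the length of the shorter one. -/
def agreements (u v : List α) : ℕ :=
  (u.zip v).countP fun q => q.1 == q.2

theorem agreements_append {u v : List α} (h : u.length = v.length) (u' v' : List α) :
    agreements (u ++ u') (v ++ v') = agreements u v + agreements u' v' := by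
  rw [agreements, List.zip_append h, List.countP_append, agreements, agreements]

theorem agreements_cons (a b : α) (u v : List α) :
    agreements (a :: u) (b :: v) = agreements u v + if a = b then 1 else 0 := by
  simp [agreements, List.countP_cons]

theorem length_filter_getD_eq_agreements {u v : List α} {m : ℕ} (hu : u.length = m)
    (hv : v.length = m) (d : α) :
    ((List.range m).filter fun i => u.getD i d == v.getD i d).length = agreements u v := by
  have hzip : u.zip v = (List.range m).map fun i => (u.getD i d, v.getD i d) := by
    refine List.ext_getElem (by simp [hu, hv]) fun i hi _ => ?_
    rw [List.length_zip, lt_min_iff] at hi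
    simp [hi]
  rw [agreements, hzip, List.countP_map, List.countP_eq_length_filter]
  rfl

end Agreements

namespace BT

section Tamari

/-- Number of nodes on the leftmost branch of a tree. -/
def leftSpine : BT → ℕ
  | leaf => 0
  | node l _ => leftSpine l + 1

theorem size_eq_zero {T : BT} : T.size = 0 ↔ T = leaf := by
  cases T <;> simp [size]

theorem leftSpine_le_size (T : BT) : T.leftSpine ≤ T.size := by
  induction T with
  | leaf => rfl
  | node l r ihl _ => simp only [leftSpine, size]; omega

/-- `graft A S c` inserts into `S` a new node with left subtree `A`, at depth `c` of the leftmost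
branch; what was there becomes the right subtree of the new node. This is meaningful for
`c ≤ S.leftSpine`; a larger depth is lowered to `S.leftSpine`. -/
def graft (A : BT) : BT → ℕ → BT
  | S, 0 => node A S
  | leaf, _ + 1 => node A leaf
  | node P Q, c + 1 => node (graft A P c) Q

theorem graft_zero (A S : BT) : graft A S 0 = node A S := by
  cases S <;> rfl

theorem graft_succ (A P Q : BT) (c : ℕ) : graft A (node P Q) (c + 1) = node (graft A P c) Q :=
  rfl

theorem size_graft (A S : BT) (c : ℕ) : (graft A S c).size = A.size + S.size + 1 := by
  induction S generalizing c with
  | leaf => cases c <;> rfl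
  | node P Q ihP _ =>
    cases c with
    | zero => rfl
    | succ c => simp only [graft_succ, size, ihP]; omega

theorem leftSpine_graft (A : BT) {S : BT} {c : ℕ} (hc : c ≤ S.leftSpine) :
    (graft A S c).leftSpine = A.leftSpine + 1 + c := by
  induction S generalizing c with
  | leaf =>
    obtain rfl := Nat.le_zero.1 hc
    rfl
  | node P Q ihP _ =>
    cases c with
    | zero => rfl
    | succ c => rw [graft_succ, leftSpine, ihP (Nat.le_of_succ_le_succ hc), add_assoc _ c]

theorem graft_inj {A S A' S' : BT} {c c' : ℕ} (hA : A.size = A'.size) (hc : c ≤ S.leftSpine)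
    (hc' : c' ≤ S'.leftSpine) (h : graft A S c = graft A' S' c') : A = A' ∧ S = S' ∧ c = c' := by
  have graft_ne {B B' P : BT} (hB : B.size = B'.size) (d : ℕ) : B ≠ graft B' P d := fun h => by
    have := congrArg size h
    rw [size_graft] at this
    omega
  induction c generalizing S S' c' with
  | zero =>
    cases c' with
    | zero => simpa [graft_zero] using h
    | succ c' =>
      cases S' with
      | leaf => cases hc'
      | node P' Q' =>
        rw [graft_zero, graft_succ, node.injEq] at h
        exact absurd h.1 (graft_ne hA c')
  | succ c ih =>
    cases S with
    | leaf => cases hc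
    | node P Q =>
      cases c' with
      | zero =>
        rw [graft_zero, graft_succ, node.injEq] at h
        exact absurd h.1.symm (graft_ne hA.symm c)
      | succ c' =>
        cases S' with
        | leaf => cases hc'
        | node P' Q' =>
          rw [graft_succ, graft_succ, node.injEq] at h
          obtain ⟨rfl, rfl, rfl⟩ :=
            ih (Nat.le_of_succ_le_succ hc) (Nat.le_of_succ_le_succ hc') h.1
          exact ⟨rfl, by rw [h.2], rfl⟩

theorem Rot.size_eq {T T' : BT} (h : Rot T T') : T.size = T'.size := by
  induction h <;> simp only [size] <;> omega

theorem tle.size_eq {T T' : BT} (h : tle T T') : T.size = T'.size := by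
  induction h with
  | refl => rfl
  | tail _ h ih => rw [ih, h.size_eq]

theorem tle.left {l l' : BT} (r : BT) (h : tle l l') : tle (node l r) (node l' r) :=
  Relation.ReflTransGen.lift (node · r) (fun _ _ => Rot.left r) _ _ h

theorem tle.right (l : BT) {r r' : BT} (h : tle r r') : tle (node l r) (node l r') :=
  Relation.ReflTransGen.lift (node l) (fun _ _ => Rot.right l) _ _ h

theorem graft_tle (A S : BT) (c : ℕ) : tle (graft A S c) (node A S) := by
  induction S generalizing c with
  | leaf => cases c <;> exact .refl
  | node P Q ihP _ =>
    cases c with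
    | zero => exact .refl
    | succ c => exact ((ihP c).left Q).tail (.rotate A P Q)

theorem Rot.exists_eq_graft {T A S : BT} {c : ℕ} (h : Rot T (graft A S c))
    (hc : c ≤ S.leftSpine) :
    ∃ A' S' c', tle A' A ∧ tle S' S ∧ c' ≤ S'.leftSpine ∧ T = graft A' S' c' := by
  induction S generalizing c T with
  | leaf =>
    obtain rfl := Nat.le_zero.1 hc
    cases h with
    | left _ h => exact ⟨_, leaf, 0, .single h, .refl, le_rfl, rfl⟩
    | right _ h => cases h
  | node P Q ihP _ =>
    cases c with
    | zero =>
      cases h with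
      | rotate =>
        exact ⟨A, node P Q, 1, .refl, .refl, Nat.le_add_left _ _, by rw [graft_succ, graft_zero]⟩
      | left _ h => exact ⟨_, node P Q, 0, .single h, .refl, Nat.zero_le _, rfl⟩
      | right _ h => exact ⟨A, _, 0, .refl, .single h, Nat.zero_le _, (graft_zero _ _).symm⟩
    | succ c =>
      rw [graft_succ] at h
      generalize hX : graft A P c = X at h
      cases h with
      | rotate _ B C =>
        exact ⟨A, node (node P B) C, c + 2, .refl, .single (.rotate P B C),
          Nat.succ_le_succ hc, by rw [graft_succ, graft_succ, hX]⟩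
      | left _ h =>
        subst hX
        obtain ⟨A', S', c', hA, hS, hc', rfl⟩ := ihP h (Nat.le_of_succ_le_succ hc)
        exact ⟨A', node S' Q, c' + 1, hA, hS.left Q, Nat.succ_le_succ hc', rfl⟩
      | right _ h =>
        exact ⟨A, node P _, c + 1, .refl, .single (.right P h), hc, by rw [graft_succ, hX]⟩

theorem tle.exists_eq_graft {T L R : BT} (h : tle T (node L R)) :
    ∃ A S c, tle A L ∧ tle S R ∧ c ≤ S.leftSpine ∧ T = graft A S c := by
  induction h using Relation.ReflTransGen.head_induction_on with
  | refl => exact ⟨L, R, 0, .refl, .refl, Nat.zero_le _, (graft_zero _ _).symm⟩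
  | head h _ ih =>
    obtain ⟨A, S, c, hA, hS, hc, rfl⟩ := ih
    obtain ⟨A', S', c', hA', hS', hc', rfl⟩ := h.exists_eq_graft hc
    exact ⟨A', S', c', hA'.trans hA, hS'.trans hS, hc', rfl⟩

end Tamari

section Canopy

/-- The canopy without its first letter, which is always `1`. -/
def canopyTail (T : BT) : List ℕ :=
  (canopy T).tail

theorem length_canopyAux (b : ℕ) (T : BT) : (canopyAux b T).length = T.size + 1 := by
  induction T generalizing b with
  | leaf => rfl
  | node l r ihl ihr => simp only [canopyAux, List.length_append, ihl, ihr, size]; omega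

theorem length_canopyTail (T : BT) : (canopyTail T).length = T.size := by
  simp [canopyTail, canopy, length_canopyAux]

theorem canopyAux_eq_cons (b : ℕ) (T : BT) :
    canopyAux b T = (if T.size = 0 then b else 1) :: canopyTail T := by
  induction T generalizing b with
  | leaf => rfl
  | node l r ihl _ =>
    rw [canopyTail, canopy, canopyAux, canopyAux, ihl 1]
    simp [size]

theorem canopy_eq_cons (T : BT) : canopy T = 1 :: canopyTail T := by
  rw [canopy, canopyAux_eq_cons, ite_self]

theorem canopyTail_node (l r : BT) :
    canopyTail (node l r) = canopyTail l ++ canopyAux 0 r := by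
  rw [canopyTail, canopy, canopyAux, ← canopy, canopy_eq_cons, List.cons_append, List.tail_cons]

theorem canopyTail_graft (A : BT) {S : BT} {c : ℕ} (hc : c ≤ S.leftSpine) :
    canopyTail (graft A S c) =
      canopyTail A ++ (if c < S.leftSpine then 1 else 0) :: canopyTail S := by
  induction S generalizing c with
  | leaf =>
    obtain rfl := Nat.le_zero.1 hc
    exact canopyTail_node A leaf
  | node P Q ihP _ =>
    cases c with
    | zero => simp [graft_zero, canopyTail_node A, canopyAux_eq_cons 0, size, leftSpine]
    | succ c =>
      rw [graft_succ, canopyTail_node, ihP (Nat.le_of_succ_le_succ hc), canopyTail_node]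
      simp [leftSpine]

/-- Number of positions other than the first one at which the two canopies agree. -/
def tailAgree (p : BT × BT) : ℕ :=
  agreements (canopyTail p.1) (canopyTail p.2)

theorem tailAgree_leaf : tailAgree (leaf, leaf) = 0 :=
  rfl

theorem agreeCount_eq_tailAgree_add_one {p : BT × BT} (hp : p.1.size = p.2.size) :
    agreeCount p = tailAgree p + 1 := by
  have h (T : BT) : (canopy T).length = T.size + 1 := length_canopyAux 1 T
  rw [agreeCount, length_filter_getD_eq_agreements (h _) (by rw [h, hp]), canopy_eq_cons,
    canopy_eq_cons, agreements_cons, if_pos rfl, tailAgree]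

end Canopy

section Decomposition

open Finset.HasAntidiagonal

/-- The pair assembled from a left pair `a`, a right pair `b` and a grafting depth `c`. -/
def join (a b : BT × BT) (c : ℕ) : BT × BT :=
  (graft a.1 b.1 c, node a.2 b.2)

/-- Agreement (`1` or `0`) of `join a b c` at the first leaf lying to the right of the
new node: its letter is `1` in the lower tree iff that leaf is a left child there, i.e. iff
`c < b.1.leftSpine`, and is `0` in the upper tree iff `b.2` is a leaf. -/
def bonus (b : BT × BT) (c : ℕ) : ℕ :=
  if c < b.1.leftSpine ∨ b.2.size = 0 then 1 else 0

theorem tailAgree_join {a b : BT × BT} {c : ℕ} (ha : a.1.size = a.2.size)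
    (hb : b.1.size = b.2.size) (hc : c ≤ b.1.leftSpine) :
    tailAgree (join a b c) = tailAgree a + (tailAgree b + bonus b c) := by
  have hlen : (canopyTail a.1).length = (canopyTail a.2).length := by
    rw [length_canopyTail, length_canopyTail, ha]
  have hspine := b.1.leftSpine_le_size
  simp only [tailAgree, join, canopyTail_graft _ hc, canopyTail_node, canopyAux_eq_cons 0,
    agreements_append hlen, agreements_cons, bonus]
  grind

theorem interval_join {a b : BT × BT} {i j : ℕ} (ha : interval a i) (hb : interval b j) (c : ℕ) :
    interval (join a b c) (i + j + 1) := by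
  obtain ⟨rfl, ha', ha⟩ := ha
  obtain ⟨rfl, hb', hb⟩ := hb
  exact ⟨size_graft _ _ _, by rw [join, size, ha', hb'],
    (graft_tle _ _ _).trans ((ha.left _).trans (hb.right _))⟩

theorem interval.exists_eq_join {p : BT × BT} {n : ℕ} (hp : interval p (n + 1)) :
    ∃ i j a b c, i + j = n ∧ interval a i ∧ interval b j ∧ c ≤ b.1.leftSpine ∧
      join a b c = p := by
  obtain ⟨T, T'⟩ := p
  obtain ⟨-, hsize, hle⟩ := hp
  cases T' with
  | leaf => cases hsize
  | node L R =>
    obtain ⟨A, S, c, hA, hS, hc, rfl⟩ := tle.exists_eq_graft hle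
    exact ⟨L.size, R.size, (A, L), (S, R), c, Nat.succ_injective hsize, ⟨hA.size_eq, rfl, hA⟩,
      ⟨hS.size_eq, rfl, hS⟩, hc, rfl⟩

theorem join_inj {a b a' b' : BT × BT} {c c' : ℕ} (ha : a.1.size = a.2.size)
    (ha' : a'.1.size = a'.2.size) (hc : c ≤ b.1.leftSpine) (hc' : c' ≤ b'.1.leftSpine)
    (h : join a b c = join a' b' c') : a = a' ∧ b = b' ∧ c = c' := by
  rw [join, join, Prod.mk.injEq, node.injEq] at h
  obtain ⟨hgraft, ha₂, hb₂⟩ := h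
  obtain ⟨ha₁, hb₁, rfl⟩ := graft_inj (by rw [ha, ha', ha₂]) hc hc' hgraft
  exact ⟨Prod.ext ha₁ ha₂, Prod.ext hb₁ hb₂, rfl⟩

theorem finite_setOf_size_le (n : ℕ) : {T : BT | T.size ≤ n}.Finite := by
  induction n with
  | zero =>
    exact (Set.finite_singleton leaf).subset fun _ h => size_eq_zero.1 (Nat.le_zero.1 h)
  | succ n ih =>
    refine ((ih.image2 node ih).insert leaf).subset ?_
    rintro (_ | ⟨l, r⟩) h
    · exact .inl rfl
    · have h : l.size + r.size ≤ n := Nat.le_of_succ_le_succ h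
      exact .inr ⟨l, (Nat.le_add_right _ _).trans h, r, (Nat.le_add_left _ _).trans h, rfl⟩

theorem finite_setOf_interval (n : ℕ) : {p : BT × BT | interval p n}.Finite :=
  ((finite_setOf_size_le n).prod (finite_setOf_size_le n)).subset
    fun _ hp => ⟨hp.1.le, hp.2.1.le⟩

/-- The Tamari intervals of size `n`, as a finset. -/
noncomputable def intervals (n : ℕ) : Finset (BT × BT) :=
  (finite_setOf_interval n).toFinset

theorem mem_intervals {n : ℕ} {p : BT × BT} : p ∈ intervals n ↔ interval p n := by
  simp [intervals]

theorem intervals_zero : intervals 0 = {(leaf, leaf)} := by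
  ext ⟨T, T'⟩
  rw [mem_intervals, Finset.mem_singleton]
  constructor
  · rintro ⟨hT, hT', -⟩
    exact Prod.ext (size_eq_zero.1 hT) (size_eq_zero.1 hT')
  · rintro ⟨⟩
    exact ⟨rfl, rfl, .refl⟩

theorem sum_intervals_succ {M : Type*} [AddCommMonoid M] (n : ℕ) (f : BT × BT → M) :
    ∑ p ∈ intervals (n + 1), f p =
      ∑ ij ∈ antidiagonal n, ∑ a ∈ intervals ij.1, ∑ b ∈ intervals ij.2,
        ∑ c ∈ Finset.range (b.1.leftSpine + 1), f (join a b c) := by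
  simp_rw [Finset.sum_sigma']
  symm
  refine Finset.sum_bij (fun z _ => join z.2.1 z.2.2.1 z.2.2.2) ?_ ?_ ?_ fun _ _ => rfl <;>
    simp only [Finset.mem_sigma, mem_antidiagonal, mem_intervals, Finset.mem_range,
      Nat.lt_succ_iff]
  · rintro ⟨⟨i, j⟩, a, b, c⟩ ⟨rfl, ha, hb, -⟩
    exact interval_join ha hb c
  · rintro ⟨⟨i, j⟩, a, b, c⟩ ⟨-, ha, hb, hc⟩ ⟨⟨i', j'⟩, a', b', c'⟩ ⟨-, ha', hb', hc'⟩ h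
    obtain ⟨rfl, rfl, rfl⟩ :=
      join_inj (ha.1.trans ha.2.1.symm) (ha'.1.trans ha'.2.1.symm) hc hc' h
    obtain rfl : i = i' := ha.1.symm.trans ha'.1
    obtain rfl : j = j' := hb.1.symm.trans hb'.1
    rfl
  · intro p hp
    obtain ⟨i, j, a, b, c, hij, ha, hb, hc, rfl⟩ := hp.exists_eq_join
    exact ⟨⟨(i, j), a, b, c⟩, ⟨hij, ha, hb, hc⟩, rfl⟩

end Decomposition

end BT

namespace BT

section GeneratingFunctions

open Polynomial Finset.HasAntidiagonal

variable {R : Type*} [CommRing R] (y : R)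

/-- Weight of a pair of trees: `y` marks the agreements after the first letter of the canopies and
`1 + X` marks the left spine of the lower tree. -/
noncomputable def weight (p : BT × BT) : R[X] :=
  C (y ^ tailAgree p) * (1 + X) ^ p.1.leftSpine

/-- Weighted count of the Tamari intervals of size `n`. -/
noncomputable def intervalPoly (n : ℕ) : R[X] :=
  ∑ p ∈ intervals n, weight y p

/-- Weighted count of the possible right parts `(b, c)` of `join a b c` with `b` of size `n`. The
factor `1 + X` accounting for the new node itself is left out. -/
noncomputable def rightPartPoly (n : ℕ) : R[X] :=
  ∑ b ∈ intervals n, ∑ c ∈ Finset.range (b.1.leftSpine + 1),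
    C (y ^ (tailAgree b + bonus b c)) * (1 + X) ^ c

theorem weight_join {a b : BT × BT} {c : ℕ} (ha : a.1.size = a.2.size)
    (hb : b.1.size = b.2.size) (hc : c ≤ b.1.leftSpine) :
    weight y (join a b c) =
      (1 + X) * (weight y a * (C (y ^ (tailAgree b + bonus b c)) * (1 + X) ^ c)) := by
  rw [weight, tailAgree_join ha hb hc, join, leftSpine_graft _ hc, weight, pow_add y, C_mul]
  ring

theorem intervalPoly_zero : intervalPoly y 0 = 1 := by
  simp [intervalPoly, intervals_zero, weight, tailAgree_leaf, leftSpine]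

theorem intervalPoly_succ (n : ℕ) :
    intervalPoly y (n + 1) =
      (1 + X) * ∑ ij ∈ antidiagonal n, intervalPoly y ij.1 * rightPartPoly y ij.2 := by
  simp only [intervalPoly, rightPartPoly, sum_intervals_succ, Finset.sum_mul_sum]
  simp only [Finset.mul_sum]
  refine Finset.sum_congr rfl fun ij _ => Finset.sum_congr rfl fun a ha =>
    Finset.sum_congr rfl fun b hb => Finset.sum_congr rfl fun c hc => ?_
  obtain ⟨ha₁, ha₂, -⟩ := mem_intervals.1 ha
  obtain ⟨hb₁, hb₂, -⟩ := mem_intervals.1 hb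
  exact weight_join y (ha₁.trans ha₂.symm) (hb₁.trans hb₂.symm)
    (Nat.lt_succ_iff.1 (Finset.mem_range.1 hc))

theorem rightPartPoly_zero : rightPartPoly y 0 = C y := by
  simp [rightPartPoly, intervals_zero, bonus, tailAgree_leaf, leftSpine, size]

theorem X_mul_sum_bonus {b : BT × BT} (hb : b.2.size ≠ 0) :
    X * ∑ c ∈ Finset.range (b.1.leftSpine + 1), C (y ^ (tailAgree b + bonus b c)) * (1 + X) ^ c =
      X * weight y b + C y * weight y b - C y * C (y ^ tailAgree b) := by
  have hlt : ∑ c ∈ Finset.range b.1.leftSpine,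
      C (y ^ (tailAgree b + bonus b c)) * (1 + X : R[X]) ^ c =
        C (y ^ tailAgree b) * C y * ∑ c ∈ Finset.range b.1.leftSpine, (1 + X) ^ c := by
    rw [Finset.mul_sum]
    refine Finset.sum_congr rfl fun c hc => ?_
    simp [bonus, Finset.mem_range.1 hc, pow_succ]
  have hspine : bonus b b.1.leftSpine = 0 := by simp [bonus, hb]
  rw [Finset.sum_range_succ, hlt, hspine, weight, add_zero]
  linear_combination C (y ^ tailAgree b) * C y * mul_geom_sum (1 + X : R[X]) b.1.leftSpine

theorem coeff_zero_intervalPoly (n : ℕ) :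
    (intervalPoly y n).coeff 0 = ∑ p ∈ intervals n, y ^ tailAgree p := by
  simp [intervalPoly, weight, eval_finsetSum, coeff_zero_eq_eval_zero]

theorem X_mul_rightPartPoly_succ (n : ℕ) :
    X * rightPartPoly y (n + 1) = X * intervalPoly y (n + 1) + C y * intervalPoly y (n + 1) -
      C y * C ((intervalPoly y (n + 1)).coeff 0) := by
  rw [coeff_zero_intervalPoly, rightPartPoly, intervalPoly, map_sum, Finset.mul_sum, Finset.mul_sum,
    Finset.mul_sum, Finset.mul_sum, ← Finset.sum_add_distrib, ← Finset.sum_sub_distrib]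
  refine Finset.sum_congr rfl fun b hb => X_mul_sum_bonus y ?_
  rw [(mem_intervals.1 hb).2.1]
  exact n.succ_ne_zero

/-- Generating function, in the size, of the Tamari intervals of positive size. -/
noncomputable def intervalSeries : PowerSeries R[X] :=
  PowerSeries.mk (intervalPoly y) - 1

theorem constantCoeff_intervalSeries : PowerSeries.constantCoeff (intervalSeries y) = 0 := by
  simp [intervalSeries, intervalPoly_zero]

theorem coeff_succ_intervalSeries (n : ℕ) :
    PowerSeries.coeff (n + 1) (intervalSeries y) = intervalPoly y (n + 1) := by
  simp [intervalSeries, PowerSeries.coeff_one]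

theorem intervalSeries_eq_mul :
    intervalSeries y = PowerSeries.X * PowerSeries.C (1 + X) *
      ((1 + intervalSeries y) * PowerSeries.mk (rightPartPoly y)) := by
  ext1 n
  rw [mul_assoc]
  cases n with
  | zero => simp [constantCoeff_intervalSeries]
  | succ n =>
    rw [coeff_succ_intervalSeries, PowerSeries.coeff_succ_X_mul, PowerSeries.coeff_C_mul,
      intervalSeries, add_sub_cancel, PowerSeries.coeff_mul, intervalPoly_succ]
    simp only [PowerSeries.coeff_mk]

theorem C_X_mul_mk_rightPartPoly :
    PowerSeries.C X * PowerSeries.mk (rightPartPoly y) =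
      PowerSeries.C (C y) * PowerSeries.C X + PowerSeries.C X * intervalSeries y +
        PowerSeries.C (C y) * intervalSeries y -
        PowerSeries.C (C y) * PowerSeries.map (C.comp constantCoeff) (intervalSeries y) := by
  ext1 n
  rw [← map_mul]
  simp only [map_sub, map_add, PowerSeries.coeff_C_mul, PowerSeries.coeff_map,
    PowerSeries.coeff_mk, PowerSeries.coeff_C]
  cases n with
  | zero => simp [constantCoeff_intervalSeries, rightPartPoly_zero, X_mul_C]
  | succ n =>
    simp [coeff_succ_intervalSeries, X_mul_rightPartPoly_succ]

theorem intervalSeries_functional_equation :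
    PowerSeries.C X * intervalSeries y =
      PowerSeries.X * (1 + PowerSeries.C X) * (1 + intervalSeries y) *
        (PowerSeries.C (C y) * PowerSeries.C X + PowerSeries.C X * intervalSeries y +
          PowerSeries.C (C y) * intervalSeries y -
          PowerSeries.C (C y) * PowerSeries.map (C.comp constantCoeff) (intervalSeries y)) := by
  have h := intervalSeries_eq_mul y
  rw [map_add, map_one] at h
  linear_combination PowerSeries.C X * h + PowerSeries.X * (1 + PowerSeries.C X) *
    (1 + intervalSeries y) * C_X_mul_mk_rightPartPoly y

/-- Generating function of the Tamari intervals of positive size, by size and, marked by `y`, number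
of agreements after the first letter. -/
noncomputable def agreementSeries : PowerSeries R :=
  PowerSeries.map constantCoeff (intervalSeries y)

theorem coeff_succ_agreementSeries (n : ℕ) :
    PowerSeries.coeff (n + 1) (agreementSeries y) =
      ∑ p ∈ intervals (n + 1), y ^ tailAgree p := by
  rw [agreementSeries, PowerSeries.coeff_map, coeff_succ_intervalSeries, constantCoeff_apply,
    coeff_zero_intervalPoly]

theorem exists_parametrization_agreementSeries [IsDomain R] (hy : y ≠ 0) :
    ∃ U : PowerSeries R, U = PowerSeries.X * ((1 + U) ^ 3 * (PowerSeries.C y + U)) ∧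
      PowerSeries.C y * agreementSeries y =
        PowerSeries.C y * U - PowerSeries.C y * U ^ 2 - U ^ 3 := by
  have hy' : PowerSeries.C y ∉ Ideal.span {(PowerSeries.X : PowerSeries R)} := by
    rwa [Ideal.mem_span_singleton, PowerSeries.X_dvd_iff, PowerSeries.constantCoeff_C]
  refine exists_parametrization_of_kernel_equation (H := swapVars (intervalSeries y))
    PowerSeries.X_ne_zero hy' ?_
  have hmap : PowerSeries.map (C.comp constantCoeff) (intervalSeries y) =
      PowerSeries.map C (agreementSeries y) := by
    rw [agreementSeries, PowerSeries.map_comp, RingHom.comp_apply]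
  have h := congrArg swapVars (intervalSeries_functional_equation y)
  simp only [hmap, map_mul, map_add, map_sub, map_one, swapVars_X, swapVars_C_X, swapVars_C_C,
    swapVars_map_C] at h
  rw [map_mul]
  exact h

theorem coeff_coeff_agreementSeries (n k : ℕ) :
    (PowerSeries.coeff (n + 1) (agreementSeries (X : R[X]))).coeff (k + 1) =
      (Set.ncard {p | interval p (n + 1) ∧ agreeCount p = k + 2} : R) := by
  have hset : {p | interval p (n + 1) ∧ agreeCount p = k + 2} =
      ({p ∈ intervals (n + 1) | k + 1 = tailAgree p} : Finset (BT × BT)) := by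
    ext p
    simp only [Set.mem_ofPred_eq, Finset.coe_filter, mem_intervals]
    refine and_congr_right fun hp => ?_
    rw [agreeCount_eq_tailAgree_add_one (hp.1.trans hp.2.1.symm)]
    omega
  rw [hset, Set.ncard_coe_finset, coeff_succ_agreementSeries, finsetSum_coeff]
  simp only [coeff_X_pow, Finset.sum_boole]

end GeneratingFunctions

end BT

theorem count_tamari_intervals_by_canopy_agreement (n k : ℕ) (hn : 1 ≤ n) :
    n * (n + 1) *
        Set.ncard {p : BT × BT | BT.interval p n ∧ BT.agreeCount p = k + 2} =
      2 * Nat.choose (3 * n) k * Nat.choose (n + 1) (k + 2) := by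
  obtain ⟨m, rfl⟩ := Nat.exists_eq_add_of_le' hn
  obtain ⟨U, hU, hz⟩ :=
    BT.exists_parametrization_agreementSeries (Polynomial.X : Polynomial ℤ) Polynomial.X_ne_zero
  have h := congrArg (Polynomial.coeff · (k + 2)) (coeff_succ_of_parametrization hU hz m)
  have hnum : ((m : Polynomial ℤ) + 1) * (m + 2) = ((m + 1) * (m + 2) : ℕ) := by push_cast; rfl
  simp only [hnum, PowerSeries.coeff_C_mul, Polynomial.coeff_natCast_mul,
    Polynomial.coeff_ofNat_mul, Polynomial.coeff_X_mul, BT.coeff_coeff_agreementSeries,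
    coeff_coeff_X_add_C_X_pow_mul_one_add_X_pow] at h
  rw [mul_assoc 2]
  exact_mod_cast h
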